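/- Let A be the incidence matrix of a connected signed directed graph on n nodes and m edges, with weight matrix W = diag(W₁,…,W_m) where each W_j ∈ {−1, +1}. Call a spanning tree positive (resp. negative) if it contains an even (resp. odd) number of edges with weight −1. Then the kernel of A W Aᵀ has dimension strictly greater than one (equivalently, rank(A W Aᵀ) < n − 1, i.e. the equilibrium set of the linear flow x′ = −A W Aᵀ x has dimension higher than one) if and only if the number of positive spanning trees equals the number of negative spanning trees. -/

import Mathlib

open Matrix

/-- `A` is the incidence matrix of a directed graph: each column has exactly one
entry equal to `+1`, exactly one entry equal to `-1`, and all other entries `0`. -/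
def IsIncidenceMatrix {V E : Type*} (A : Matrix V E ℝ) : Prop :=
  ∀ j : E, ∃ i k : V, i ≠ k ∧ A i j = 1 ∧ A k j = -1 ∧
    ∀ l : V, l ≠ i → l ≠ k → A l j = 0

/-- The underlying undirected graph (nodes `a, b` adjacent iff some column of `A`
is nonzero in both rows) is connected. -/
def IsConnectedIncidence {V E : Type*} (A : Matrix V E ℝ) : Prop :=
  ∀ i k : V, Relation.ReflTransGen (fun a b => a ≠ b ∧ ∃ j : E, A a j ≠ 0 ∧ A b j ≠ 0) i k

/-- A set `T` of `n - 1` edges (columns of `A`) is a spanning tree of the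
underlying graph of an incidence matrix on `n` nodes: it has `n - 1` edges and
the subgraph formed by the edges of `T` connects all the nodes. -/
def IsSpanningTree {n m : ℕ} (A : Matrix (Fin n) (Fin m) ℝ) (T : Finset (Fin m)) : Prop :=
  T.card = n - 1 ∧
  ∀ i k : Fin n, Relation.ReflTransGen
    (fun a b => a ≠ b ∧ ∃ j ∈ T, A a j ≠ 0 ∧ A b j ≠ 0) i k

/-- The finite set of all spanning trees of the underlying graph of `A`. -/
noncomputable def spanningTrees {n m : ℕ} (A : Matrix (Fin n) (Fin m) ℝ) :
    Finset (Finset (Fin m)) :=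
  @Finset.filter _ (fun T => IsSpanningTree A T) (Classical.decPred _) Finset.univ

/-- A spanning tree is *positive* if it contains an even number of edges with
weight `-1` (equivalently, its weight product is `+1`). -/
def IsPositiveTree {m : ℕ} (w : Fin m → ℝ) (T : Finset (Fin m)) : Prop :=
  Even (@Finset.filter _ (fun j => w j = -1) (Classical.decPred _) T).card

/-!
The Laplacian `L = A W Aᵀ` has vanishing row and column sums, so deleting the row and the column
of a root vertex does not change its rank. Hence `dim ker L > 1` exactly when the reduced Laplacian
`B W Bᵀ` is singular, where `B` is `A` without the row of the root. By the Cauchy–Binet formula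
`det (B W Bᵀ)` is the sum over the sets `T` of `n - 1` edges of `(∏_{j ∈ T} W_j) (det B_T)²`.
If `T` connects the graph, every basis vector is an integer combination of columns of `B_T`, so
`det B_T = ±1`; otherwise the indicator of the vertices not joined to the root is annihilated by
`B_T`, so `det B_T = 0`. Therefore `det (B W Bᵀ)` is the sum of the weights of all spanning trees,
which for signed graphs is the number of positive trees minus the number of negative ones.
-/

section CauchyBinet

variable {ι κ R : Type*} [Fintype ι] [DecidableEq ι] [CommRing R]

theorem det_of_sum_mul_eq_sum_piFinset (S : Finset κ) (B : Matrix ι κ R) (C : Matrix κ ι R) :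
    (of fun i k => ∑ j ∈ S, B i j * C j k).det =
      ∑ f ∈ Fintype.piFinset fun _ : ι => S, (∏ i, B i (f i)) * (C.submatrix f id).det := by
  have rows : (of fun i k => ∑ j ∈ S, B i j * C j k) = fun i => ∑ j ∈ S, B i j • C j := by
    ext i k
    simp [Finset.sum_apply]
  rw [rows]
  refine (detRowAlternating.toMultilinearMap.map_sum_finset
    (fun i j => B i j • C j) fun _ => S).trans (Finset.sum_congr rfl fun f _ => ?_)
  exact detRowAlternating.toMultilinearMap.map_smul_univ (fun i => B i (f i)) fun i => C (f i)

theorem det_submatrix_eq_zero_of_not_injective (C : Matrix κ ι R) {f : ι → κ}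
    (hf : ¬ Function.Injective f) : (C.submatrix f id).det = 0 := by
  obtain ⟨i, k, hik, hne⟩ := Function.not_injective_iff.mp hf
  exact det_zero_of_row_eq hne (funext fun l => by simp only [submatrix_apply, hik])

theorem image_univ_eq_iff_forall_mem {ι κ : Type*} [Fintype ι] [DecidableEq κ] {f : ι → κ}
    (hf : Function.Injective f) {S : Finset κ} (hS : S.card = Fintype.card ι) :
    Finset.univ.image f = S ↔ ∀ i, f i ∈ S := by
  have hcard : S.card ≤ (Finset.univ.image f).card := by
    rw [Finset.card_image_of_injective _ hf, Finset.card_univ, hS]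
  rw [← Finset.subset_iff_eq_of_card_le hcard, Finset.image_subset_iff]
  simp only [Finset.mem_univ, true_imp_iff]

theorem sum_eq_sum_powersetCard_sum_piFinset [Fintype κ] {M : Type*} [AddCommMonoid M]
    (t : (ι → κ) → M) (ht : ∀ f, t f ≠ 0 → Function.Injective f) :
    ∑ f, t f = ∑ S ∈ (Finset.univ : Finset κ).powersetCard (Fintype.card ι),
      ∑ f ∈ Fintype.piFinset fun _ => S, t f := by
  classical
  have image_mem : ∀ f ∈ ({f | Function.Injective f} : Finset (ι → κ)),
      Finset.univ.image f ∈ (Finset.univ : Finset κ).powersetCard (Fintype.card ι) := by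
    intro f hf
    rw [Finset.mem_powersetCard_univ,
      Finset.card_image_of_injective _ (Finset.mem_filter.mp hf).2, Finset.card_univ]
  rw [← Finset.sum_filter_of_ne fun f _ => ht f, ← Finset.sum_fiberwise_of_maps_to image_mem]
  refine Finset.sum_congr rfl fun S hS => ?_
  refine Eq.trans ?_ (Finset.sum_filter_of_ne fun f _ => ht f)
  refine Finset.sum_congr (Finset.ext fun f => ?_) fun _ _ => rfl
  simp only [Finset.mem_filter, Finset.mem_univ, true_and, Fintype.mem_piFinset]
  rw [and_comm (b := Function.Injective f)]
  exact and_congr_right fun hf =>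
    image_univ_eq_iff_forall_mem hf (Finset.mem_powersetCard_univ.mp hS)

theorem det_mul_eq_sum_powersetCard [Fintype κ] (B : Matrix ι κ R) (C : Matrix κ ι R) :
    (B * C).det = ∑ S ∈ (Finset.univ : Finset κ).powersetCard (Fintype.card ι),
      (B.submatrix id ((↑) : S → κ) * C.submatrix ((↑) : S → κ) id).det := by
  have product_eq_univ : B * C = of fun i k => ∑ j, B i j * C j k := rfl
  have product_eq (S : Finset κ) : B.submatrix id ((↑) : S → κ) * C.submatrix ((↑) : S → κ) id =
      of fun i k => ∑ j ∈ S, B i j * C j k := by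
    ext i k
    exact Finset.sum_coe_sort S fun j => B i j * C j k
  simp only [product_eq_univ, product_eq, det_of_sum_mul_eq_sum_piFinset, Fintype.piFinset_univ]
  refine sum_eq_sum_powersetCard_sum_piFinset _ fun f => not_imp_comm.mp fun hf => ?_
  rw [det_submatrix_eq_zero_of_not_injective C hf, mul_zero]

theorem det_mul_diagonal_mul_transpose_of_equiv [Fintype κ] [DecidableEq κ] (B : Matrix ι κ R)
    (w : κ → R) (e : ι ≃ κ) :
    (B * diagonal w * Bᵀ).det = (∏ j, w j) * (B.submatrix id e).det ^ 2 := by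
  have reindexed : B * diagonal w * Bᵀ =
      B.submatrix id e * diagonal (w ∘ e) * (B.submatrix id e)ᵀ := by
    rw [← submatrix_diagonal_equiv, submatrix_mul_equiv, transpose_submatrix,
      submatrix_mul_equiv, submatrix_id_id]
  rw [reindexed, det_mul, det_mul, det_transpose, det_diagonal, ← e.prod_comp w]
  simp only [Function.comp_apply]
  ring

end CauchyBinet

section Incidence

variable {V E : Type*}

/-- The underlying simple graph of the multigraph whose edge `j` joins `hd j` and `tl j`. -/
def edgeGraph (hd tl : E → V) : SimpleGraph V :=
  SimpleGraph.fromRel fun a b => ∃ j, hd j = a ∧ tl j = b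

theorem edgeGraph_reachable_hd_tl (hd tl : E → V) (j : E) :
    (edgeGraph hd tl).Reachable (hd j) (tl j) := by
  by_cases hj : hd j = tl j
  · rw [hj]
  · exact SimpleGraph.Adj.reachable ⟨hj, .inl ⟨j, rfl, rfl⟩⟩

variable [DecidableEq V]

/-- The incidence matrix of the directed multigraph whose edge `j` runs from `tl j` to `hd j`.
Loops are allowed and give zero columns. -/
def orientedIncidence (R : Type*) [Ring R] (hd tl : E → V) : Matrix V E R :=
  of fun v j => (Pi.single (hd j) 1 - Pi.single (tl j) 1 : V → R) v

/-- The incidence matrix with the row of the root `r` deleted. -/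
def reducedIncidence (R : Type*) [Ring R] (hd tl : E → V) (r : V) : Matrix {v // v ≠ r} E R :=
  (orientedIncidence R hd tl).submatrix (↑) id

variable {R : Type*} [CommRing R] (hd tl : E → V)

theorem vecMul_orientedIncidence [Fintype V] (x : V → R) :
    x ᵥ* orientedIncidence R hd tl = fun j => x (hd j) - x (tl j) := by
  ext j
  simp [orientedIncidence, vecMul, mul_sub, dotProduct, Finset.sum_sub_distrib, Pi.single_apply]

theorem vecMul_reducedIncidence [Fintype V] {r : V} {x : V → R} (hx : x r = 0) :
    (fun v : {v // v ≠ r} => x v) ᵥ* reducedIncidence R hd tl r =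
      x ᵥ* orientedIncidence R hd tl := by
  ext j
  simp only [vecMul, dotProduct, reducedIncidence, submatrix_apply, id]
  rw [← Fintype.sum_subtype_add_sum_subtype (· ≠ r) fun v => x v * orientedIncidence R hd tl v j,
    left_eq_add]
  refine Finset.sum_eq_zero fun v _ => ?_
  rw [not_not.mp v.2, hx, zero_mul]

-- The first factor is the incidence matrix of the star centred at `r`. The product says that row
-- `r` of an incidence matrix is minus the sum of the other rows.
theorem orientedIncidence_mul_reducedIncidence [Fintype V] (r : V) :
    orientedIncidence R ((↑) : {v // v ≠ r} → V) (fun _ => r) * reducedIncidence R hd tl r =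
      orientedIncidence R hd tl := by
  ext v j
  let x : V → R := fun u => (Pi.single v 1 : V → R) u - (Pi.single v 1 : V → R) r
  have hxr : x r = 0 := sub_self _
  have row_eq : orientedIncidence R ((↑) : {v // v ≠ r} → V) (fun _ => r) v =
      fun u : {v // v ≠ r} => x u := by
    ext u
    simp [x, orientedIncidence, Pi.single_apply, eq_comm]
  rw [mul_apply_eq_vecMul, row_eq, vecMul_reducedIncidence hd tl hxr, vecMul_orientedIncidence]
  simp [x, orientedIncidence, Pi.single_apply, eq_comm]

variable {hd tl}

theorem orientedIncidence_ne_zero_iff [Nontrivial R] {j : E} (hj : hd j ≠ tl j) {v : V} :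
    orientedIncidence R hd tl v j ≠ 0 ↔ v = hd j ∨ v = tl j := by
  by_cases hv : v = hd j
  · simp [orientedIncidence, hv, hj]
  · simp [orientedIncidence, hv, Pi.single_apply]

theorem single_sub_single_mem_range_of_reachable [Fintype E] {a b : V}
    (hab : (edgeGraph hd tl).Reachable a b) :
    (Pi.single a 1 - Pi.single b 1 : V → R) ∈
      LinearMap.range (orientedIncidence R hd tl).mulVecLin := by
  classical
  have edge_mem (j : E) : (Pi.single (hd j) 1 - Pi.single (tl j) 1 : V → R) ∈
      LinearMap.range (orientedIncidence R hd tl).mulVecLin :=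
    ⟨Pi.single j 1, by rw [mulVecLin_apply, mulVec_single_one]; rfl⟩
  rw [SimpleGraph.reachable_iff_reflTransGen] at hab
  induction hab with
  | refl => simp
  | @tail b c _ hbc ih =>
    rw [← sub_add_sub_cancel _ (Pi.single b 1)]
    refine add_mem ih ?_
    obtain ⟨-, ⟨j, rfl, rfl⟩ | ⟨j, rfl, rfl⟩⟩ := hbc
    · exact edge_mem j
    · rw [← neg_sub]
      exact neg_mem (edge_mem j)

theorem mulVec_reducedIncidence_surjective [Finite V] [Fintype E]
    (hG : (edgeGraph hd tl).Preconnected) (r : V) :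
    Function.Surjective (reducedIncidence R hd tl r).mulVec := by
  have := Fintype.ofFinite V
  intro x
  obtain ⟨c, hc⟩ : ∑ v : {v // v ≠ r}, x v • (Pi.single ↑v 1 - Pi.single r 1 : V → R) ∈
      LinearMap.range (orientedIncidence R hd tl).mulVecLin :=
    sum_mem fun v _ => Submodule.smul_mem _ _ (single_sub_single_mem_range_of_reachable (hG v r))
  refine ⟨c, funext fun u => (congrFun hc u).trans ?_⟩
  simp [Pi.single_apply, u.2, Subtype.coe_inj]

theorem isUnit_det_reducedIncidence [Fintype V] (hG : (edgeGraph hd tl).Preconnected) (r : V)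
    (e : {v // v ≠ r} ≃ E) : IsUnit ((reducedIncidence R hd tl r).submatrix id e).det := by
  have : Fintype E := Fintype.ofEquiv _ e
  rw [← isUnit_iff_isUnit_det, ← mulVec_surjective_iff_isUnit]
  intro x
  obtain ⟨c, rfl⟩ := mulVec_reducedIncidence_surjective (R := R) hG r x
  exact ⟨c ∘ e, by rw [submatrix_mulVec_equiv, Function.comp_assoc, e.self_comp_symm]; rfl⟩

theorem det_reducedIncidence_eq_zero [Fintype V] [IsDomain R]
    (hG : ¬ (edgeGraph hd tl).Preconnected) (r : V) (e : {v // v ≠ r} ≃ E) :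
    ((reducedIncidence R hd tl r).submatrix id e).det = 0 := by
  classical
  obtain ⟨u, hu⟩ : ∃ u, ¬ (edgeGraph hd tl).Reachable r u := by
    by_contra! hr
    exact hG fun a b => (hr a).symm.trans (hr b)
  let x (v : V) : R := if (edgeGraph hd tl).Reachable r v then 0 else 1
  have x_hd_eq_x_tl (j : E) : x (hd j) = x (tl j) := by
    have reachable_iff :
        (edgeGraph hd tl).Reachable r (hd j) ↔ (edgeGraph hd tl).Reachable r (tl j) :=
      ⟨fun h => h.trans (edgeGraph_reachable_hd_tl hd tl j),
        fun h => h.trans (edgeGraph_reachable_hd_tl hd tl j).symm⟩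
    simp only [x, reachable_iff]
  have hxr : x r = 0 := if_pos (.refl r)
  have hur : u ≠ r := fun h => hu (h ▸ .refl u)
  refine exists_vecMul_eq_zero_iff.mp ⟨fun v => x v, fun h => ?_, ?_⟩
  · simpa [x, hu] using congrFun h ⟨u, hur⟩
  · ext i
    change ((fun v : {v // v ≠ r} => x v) ᵥ* reducedIncidence R hd tl r) (e i) = 0
    rw [vecMul_reducedIncidence hd tl hxr, vecMul_orientedIncidence]
    exact sub_eq_zero.mpr (x_hd_eq_x_tl (e i))

theorem det_reducedIncidence_sq [Fintype V] [Decidable (edgeGraph hd tl).Preconnected] (r : V)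
    (e : {v // v ≠ r} ≃ E) :
    ((reducedIncidence R hd tl r).submatrix id e).det ^ 2 =
      if (edgeGraph hd tl).Preconnected then 1 else 0 := by
  have : Fintype E := Fintype.ofEquiv _ e
  -- Units of `ℤ` square to `1`; this fails in a general `R`.
  have over_int : ((reducedIncidence ℤ hd tl r).submatrix id e).det ^ 2 =
      if (edgeGraph hd tl).Preconnected then 1 else 0 := by
    split_ifs with hG
    · exact Int.isUnit_sq (isUnit_det_reducedIncidence hG r e)
    · rw [det_reducedIncidence_eq_zero hG r e, zero_pow two_ne_zero]
  have cast_det : ((reducedIncidence R hd tl r).submatrix id e).det =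
      (((reducedIncidence ℤ hd tl r).submatrix id e).det : R) := by
    rw [Int.cast_det]
    congr 1
    ext v i
    simp [reducedIncidence, orientedIncidence, Pi.single_apply]
  rw [cast_det]
  exact_mod_cast congrArg (Int.cast : ℤ → R) over_int

end Incidence

section MatrixTree

variable {V E R : Type*} [Fintype V] [Fintype E] [CommRing R]

open Classical in
/-- The edge sets of the spanning trees of the multigraph whose edge `j` joins `hd j` and `tl j`:
the sets of `|V| - 1` edges that connect all vertices. For empty `V`, truncated subtraction makes
`∅` the only one. -/
noncomputable def spanningTreeEdgeSets (hd tl : E → V) : Finset (Finset E) :=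
  {T ∈ (Finset.univ : Finset E).powersetCard (Fintype.card V - 1) |
    (edgeGraph (fun j : T => hd j) fun j : T => tl j).Preconnected}

theorem det_reducedIncidence_mul_diagonal_mul_transpose [DecidableEq V] [DecidableEq E]
    (hd tl : E → V) (w : E → R) (r : V) :
    (reducedIncidence R hd tl r * diagonal w * (reducedIncidence R hd tl r)ᵀ).det =
      ∑ T ∈ spanningTreeEdgeSets hd tl, ∏ j ∈ T, w j := by
  classical
  have card_ne : Fintype.card {v // v ≠ r} = Fintype.card V - 1 := Set.card_ne_eq r
  rw [det_mul_eq_sum_powersetCard, spanningTreeEdgeSets, Finset.sum_filter, card_ne]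
  refine Finset.sum_congr rfl fun T hT => ?_
  have e : {v // v ≠ r} ≃ T := Fintype.equivOfCardEq <| by
    rw [card_ne, Fintype.card_coe, Finset.mem_powersetCard_univ.mp hT]
  have factor_eq : (reducedIncidence R hd tl r * diagonal w).submatrix id ((↑) : T → E) =
      reducedIncidence R (fun j : T => hd j) (fun j : T => tl j) r *
        diagonal fun j : T => w j := by
    ext v j
    simp [mul_diagonal, reducedIncidence, orientedIncidence]
  have transpose_eq : (reducedIncidence R hd tl r)ᵀ.submatrix ((↑) : T → E) id =
      (reducedIncidence R (fun j : T => hd j) (fun j : T => tl j) r)ᵀ := rfl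
  rw [factor_eq, transpose_eq, det_mul_diagonal_mul_transpose_of_equiv _ _ e,
    det_reducedIncidence_sq, Finset.prod_coe_sort T w, mul_ite, mul_one, mul_zero]
  congr

end MatrixTree

section Corank

theorem rank_reducedIncidence_mul_mul_transpose {V E R : Type*} [Fintype V] [DecidableEq V]
    [Fintype E] [CommRing R] [Nontrivial R] (hd tl : E → V) (M : Matrix E E R) (r : V) :
    (reducedIncidence R hd tl r * M * (reducedIncidence R hd tl r)ᵀ).rank =
      (orientedIncidence R hd tl * M * (orientedIncidence R hd tl)ᵀ).rank := by
  set A := orientedIncidence R hd tl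
  set B := reducedIncidence R hd tl r
  let Q := orientedIncidence R ((↑) : {v // v ≠ r} → V) fun _ => r
  have factorization : A * M * Aᵀ = Q * (B * M * Bᵀ) * Qᵀ := by
    rw [show A = Q * B from (orientedIncidence_mul_reducedIncidence hd tl r).symm, transpose_mul]
    simp only [Matrix.mul_assoc]
  have minor : B * M * Bᵀ = (A * M * Aᵀ).submatrix (↑) (↑) := rfl
  apply le_antisymm
  · exact minor ▸ rank_submatrix_le _ _ _
  · exact factorization ▸ (rank_mul_le_left _ _).trans (rank_mul_le_right _ _)

variable {ι V E K : Type*} [Fintype ι] [Fintype V] [Fintype E] [Field K]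

theorem one_lt_finrank_ker_iff_rank_lt (M : Matrix ι ι K) :
    1 < Module.finrank K (LinearMap.ker M.mulVecLin) ↔ M.rank < Fintype.card ι - 1 := by
  have rank_nullity := LinearMap.finrank_range_add_finrank_ker M.mulVecLin
  rw [Module.finrank_fintype_fun_eq_card] at rank_nullity
  rw [rank]
  lia

theorem det_eq_zero_iff_rank_lt_card [DecidableEq ι] (M : Matrix ι ι K) :
    M.det = 0 ↔ M.rank < Fintype.card ι := by
  rw [← not_iff_not, not_lt, ← ne_eq, ← isUnit_iff_ne_zero, ← isUnit_iff_isUnit_det,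
    ← mulVec_surjective_iff_isUnit, ← coe_mulVecLin, ← LinearMap.range_eq_top,
    ← Module.finrank_fintype_fun_eq_card K, rank]
  exact ⟨fun h => by rw [h, finrank_top],
    fun h => Submodule.eq_top_of_finrank_eq ((Submodule.finrank_le _).antisymm h)⟩

theorem spanningTreeEdgeSets_eq_singleton_empty [IsEmpty V] (hd tl : E → V) :
    spanningTreeEdgeSets hd tl = {∅} := by
  have : IsEmpty E := Function.isEmpty hd
  ext T
  simp [spanningTreeEdgeSets, Finset.eq_empty_of_isEmpty T, SimpleGraph.Preconnected]

theorem one_lt_finrank_ker_laplacian_iff [DecidableEq V] [DecidableEq E]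
    (hd tl : E → V) (w : E → K) :
    1 < Module.finrank K (LinearMap.ker
        (orientedIncidence K hd tl * diagonal w * (orientedIncidence K hd tl)ᵀ).mulVecLin) ↔
      ∑ T ∈ spanningTreeEdgeSets hd tl, ∏ j ∈ T, w j = 0 := by
  rw [one_lt_finrank_ker_iff_rank_lt]
  obtain _ | ⟨⟨r⟩⟩ := isEmpty_or_nonempty V
  · simp [spanningTreeEdgeSets_eq_singleton_empty hd tl]
  · rw [← det_reducedIncidence_mul_diagonal_mul_transpose hd tl w r, det_eq_zero_iff_rank_lt_card,
      rank_reducedIncidence_mul_mul_transpose,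
      show Fintype.card {v // v ≠ r} = _ from Set.card_ne_eq r]

end Corank

section RealIncidence

theorem IsIncidenceMatrix.exists_eq_orientedIncidence {V E : Type*} [DecidableEq V]
    {A : Matrix V E ℝ} (hA : IsIncidenceMatrix A) :
    ∃ hd tl : E → V, (∀ j, hd j ≠ tl j) ∧ A = orientedIncidence ℝ hd tl := by
  choose hd tl hne head_entry tail_entry other_entry using hA
  refine ⟨hd, tl, hne, ext fun v j => ?_⟩
  by_cases hv : v = hd j
  · simp [orientedIncidence, hv, hne j, head_entry]
  by_cases hv' : v = tl j
  · simp [orientedIncidence, hv', (hne j).symm, tail_entry]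
  · simp [orientedIncidence, hv, hv', other_entry]

variable {n m : ℕ}

theorem isSpanningTree_orientedIncidence_iff {hd tl : Fin m → Fin n} (hne : ∀ j, hd j ≠ tl j)
    (T : Finset (Fin m)) :
    IsSpanningTree (orientedIncidence ℝ hd tl) T ↔
      T.card = n - 1 ∧ (edgeGraph (fun j : T => hd j) fun j : T => tl j).Preconnected := by
  have adj_eq : (fun a b => a ≠ b ∧ ∃ j ∈ T, orientedIncidence ℝ hd tl a j ≠ 0 ∧
      orientedIncidence ℝ hd tl b j ≠ 0) =
      (edgeGraph (fun j : T => hd j) fun j : T => tl j).Adj := by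
    ext a b
    simp only [orientedIncidence_ne_zero_iff (hne _), edgeGraph, SimpleGraph.fromRel_adj,
      Subtype.exists, exists_prop]
    grind
  simp only [IsSpanningTree, adj_eq, SimpleGraph.Preconnected,
    SimpleGraph.reachable_iff_reflTransGen]

theorem spanningTrees_orientedIncidence {hd tl : Fin m → Fin n} (hne : ∀ j, hd j ≠ tl j) :
    spanningTrees (orientedIncidence ℝ hd tl) = spanningTreeEdgeSets hd tl := by
  ext T
  simp [spanningTrees, spanningTreeEdgeSets, isSpanningTree_orientedIncidence_iff hne]

variable {w : Fin m → ℝ}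

theorem prod_eq_ite_isPositiveTree {_ : DecidablePred (IsPositiveTree w)}
    (hw : ∀ j, w j = 1 ∨ w j = -1) (T : Finset (Fin m)) :
    ∏ j ∈ T, w j = if IsPositiveTree w T then 1 else -1 := by
  classical
  have prod_eq_neg_one_pow : ∏ j ∈ T, w j = (-1) ^ (T.filter fun j => w j = -1).card := by
    rw [← Finset.prod_const, Finset.prod_filter]
    refine Finset.prod_congr rfl fun j _ => ?_
    split_ifs with hj
    · exact hj
    · exact (hw j).resolve_right hj
  rw [prod_eq_neg_one_pow, neg_one_pow_eq_ite]
  congr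

theorem sum_prod_eq_zero_iff_card_isPositiveTree_eq {_ : DecidablePred (IsPositiveTree w)}
    {_ : DecidablePred fun T => ¬ IsPositiveTree w T} (hw : ∀ j, w j = 1 ∨ w j = -1)
    (s : Finset (Finset (Fin m))) :
    ∑ T ∈ s, ∏ j ∈ T, w j = 0 ↔
      (s.filter fun T => IsPositiveTree w T).card =
        (s.filter fun T => ¬ IsPositiveTree w T).card := by
  simp only [prod_eq_ite_isPositiveTree hw, Finset.sum_ite, Finset.sum_const, smul_neg,
    nsmul_one, ← sub_eq_add_neg, sub_eq_zero, Nat.cast_inj]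
  congr!

end RealIncidence

theorem stmt18_general {n m : ℕ} (A : Matrix (Fin n) (Fin m) ℝ) (hA : IsIncidenceMatrix A)
    (w : Fin m → ℝ) :
    1 < Module.finrank ℝ
        (LinearMap.ker (Matrix.mulVecLin (A * Matrix.diagonal w * Aᵀ))) ↔
      ∑ T ∈ spanningTrees A, ∏ j ∈ T, w j = 0 := by
  obtain ⟨hd, tl, hne, rfl⟩ := hA.exists_eq_orientedIncidence
  rw [one_lt_finrank_ker_laplacian_iff, spanningTrees_orientedIncidence hne]

/-- On a connected signed digraph (all weights `±1`), the kernel of `A W Aᵀ` has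
dimension strictly greater than one (the equilibrium set of `x' = -A W Aᵀ x` has
dimension higher than one) if and only if the number of positive spanning trees
equals the number of negative spanning trees. -/
theorem stmt18 {n m : ℕ} (A : Matrix (Fin n) (Fin m) ℝ)
    (hA : IsIncidenceMatrix A) (hconn : IsConnectedIncidence A)
    (w : Fin m → ℝ) (hw : ∀ j, w j = 1 ∨ w j = -1) :
    1 < Module.finrank ℝ
        (LinearMap.ker (Matrix.mulVecLin (A * Matrix.diagonal w * Aᵀ))) ↔
      (@Finset.filter _ (fun T => IsPositiveTree w T) (Classical.decPred _)
          (spanningTrees A)).card =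
        (@Finset.filter _ (fun T => ¬ IsPositiveTree w T) (Classical.decPred _)
          (spanningTrees A)).card :=
  (stmt18_general A hA w).trans (sum_prod_eq_zero_iff_card_isPositiveTree_eq hw _)
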